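/- Let α > 1 with α ∉ ℚ ∪ ℚ₂, let B ⊂ ℍ be nonempty with B̂ = B \ {x ∈ ℍ : x₂ ≤ |x₁|^{1/α}} finite, and define h₀ = max_{x ∈ B̂} x₂ if B̂ ≠ ∅, and h₀ = min{h ≥ 0 : B ∩ ([−⌈h^α⌉, ⌈h^α⌉] × [0,h]) ≠ ∅} if B̂ = ∅. Let D₀ = [−⌈h₀^α⌉, ⌈h₀^α⌉] × [0, h₀] and B₀ = B ∩ D₀ (so 1 ≤ |B₀| < ∞). Then there exists a constant c > 0 such that for all sufficiently large N, H_{B,N}(B₀) = Σ_{x ∈ B₀} H_{B,N}(x) ≥ c; in particular Σ_{x ∈ B₀} H_B(x) ≥ c > 0. -/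

import Mathlib

open Filter

namespace SHM

/-- The upper half planar lattice `ℍ = {(x₁,x₂) ∈ ℤ² : x₂ ≥ 0}` (including the x-axis). -/
def upperH : Set (ℤ × ℤ) := {p | 0 ≤ p.2}

/-- The horizontal line `L_n = {(x,n) : x ∈ ℤ}` of height `n`. -/
def lineH (n : ℤ) : Set (ℤ × ℤ) := {p | p.2 = n}

/-- The four unit steps of the planar simple random walk. -/
def dirs : Finset (ℤ × ℤ) := {(1,0), (-1,0), (0,1), (0,-1)}

/-- The position after `m` steps of the walk started at `z` whose first `n`
increments are given by `σ`. -/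
def pos (z : ℤ × ℤ) {n : ℕ} (σ : Fin n → ℤ × ℤ) (m : ℕ) : ℤ × ℤ :=
  z + ∑ i ∈ Finset.univ.filter (fun i : Fin n => (i : ℕ) < m), σ i

/-- The probability that the first `n` increments of the simple random walk
(each uniform on the four unit vectors) satisfy the predicate `E`. -/
noncomputable def stepProb (n : ℕ) (E : (Fin n → ℤ × ℤ) → Prop) : ℝ :=
  (Nat.card {σ : Fin n → ↥dirs // E fun i => ((σ i : ℤ × ℤ))} : ℝ) / 4 ^ n

/-- `P_z(S_{τ̄_A} = x)` : the walk started at `z` hits `A` (in finite time) for the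
first time precisely at the point `x`.  Here `τ̄_A = min {m ≥ 0 : S_m ∈ A}`. -/
noncomputable def hitProb (z : ℤ × ℤ) (A : Set (ℤ × ℤ)) (x : ℤ × ℤ) : ℝ :=
  ∑' n : ℕ, stepProb n fun σ =>
    pos z σ n = x ∧ x ∈ A ∧ ∀ m < n, pos z σ m ∉ A

/-- `P_z(τ̄_A < τ̄_B)` : the walk started at `z` hits `A` strictly before hitting `B`. -/
noncomputable def hitBeforeProb (z : ℤ × ℤ) (A B : Set (ℤ × ℤ)) : ℝ :=
  ∑' n : ℕ, stepProb n fun σ =>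
    pos z σ n ∈ A ∧ pos z σ n ∉ B ∧ ∀ m < n, pos z σ m ∉ A ∧ pos z σ m ∉ B

/-- The stationary harmonic measure `H_{B,N}(x) = Σ_{z ∈ L_N \ B} P_z(S_{τ̄_{B ∪ L₀}} = x)`. -/
noncomputable def harm (B : Set (ℤ × ℤ)) (N : ℕ) (x : ℤ × ℤ) : ℝ :=
  ∑' z : ↥(lineH (N : ℤ) \ B), hitProb (z : ℤ × ℤ) (B ∪ lineH 0) x

/-- `ℚ₁ = {log n₁ / log n₂ : n₁, n₂ ∈ ℤ, n₁, n₂ ≥ 2}`. -/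
def Q1 : Set ℝ := {r | ∃ n₁ n₂ : ℤ, 2 ≤ n₁ ∧ 2 ≤ n₂ ∧ r = Real.log n₁ / Real.log n₂}

/-- `ℚ₂ = {(b − dx)/(cx − a) ∈ ℝ : x ∈ ℚ₁, a, b, c, d ∈ ℤ}`. -/
def Q2 : Set ℝ :=
  {r | ∃ x ∈ Q1, ∃ a b c d : ℤ, (c : ℝ) * x - a ≠ 0 ∧ r = ((b : ℝ) - d * x) / ((c : ℝ) * x - a)}

/-- `B̂ = B \ {x ∈ ℍ : x₂ ≤ |x₁|^{1/α}}`. -/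
def Bhat (α : ℝ) (B : Set (ℤ × ℤ)) : Set (ℤ × ℤ) :=
  B \ {x ∈ upperH | (x.2 : ℝ) ≤ |(x.1 : ℝ)| ^ (1 / α)}

/-- The box `D₀ = [−⌈h₀^α⌉, ⌈h₀^α⌉] × [0, h₀]`. -/
def boxD₀ (α : ℝ) (h₀ : ℤ) : Set (ℤ × ℤ) :=
  {x | |x.1| ≤ ⌈(h₀ : ℝ) ^ α⌉ ∧ 0 ≤ x.2 ∧ x.2 ≤ h₀}

/-!
By time reversal, `H_{B,N}(x)` for `x ∈ B` is the Green potential at `x` of the indicator of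
`L_N \ B` for the walk killed on `B ∪ L₀`.  Put `β = 1/α < 1`.  The lacunary series
`∑ₖ 2^{βk} (1 - cos (2⁻ᵏ x) exp (-μₖ h))` of discrete harmonic functions dominates a multiple of
`|x|^β` and grows sublinearly along vertical lines, so a multiple `f` of it satisfies
`h ≤ f + h₀` on `B ∪ L₀`.  Hence `4 (min(h, N) - f - h₀)` is nonpositive on `B ∪ L₀` and
subharmonic off `L_N`, where its defect is at most one, so it bounds the Green potential from below.
High up on any vertical line it is positive, uniformly in `N`.  Every column through the box `D₀`
leaves `B` above the box, and walking down to the highest point of `B` in such a column costs a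
factor independent of `N`.
-/

section KilledWalk

/-- The averaging operator `φ ↦ E_·[φ(S₁)]` of the simple random walk. -/
noncomputable def stepAverage : (ℤ × ℤ → ℝ) →ₗ[ℝ] (ℤ × ℤ → ℝ) where
  toFun φ y := (1 / 4) * ∑ e ∈ dirs, φ (y + e)
  map_add' φ ψ := by ext; simp [Finset.sum_add_distrib, mul_add]
  map_smul' r φ := by ext; simp [← Finset.mul_sum, mul_left_comm]

/-- The one-step operator `φ ↦ E_·[φ(S₁); S₁ ∈ U]` of the walk killed on leaving `U`.  The
starting point is not required to lie in `U`. -/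
noncomputable def killedStep (U : Set (ℤ × ℤ)) : (ℤ × ℤ → ℝ) →ₗ[ℝ] (ℤ × ℤ → ℝ) where
  toFun φ := stepAverage (U.indicator φ)
  map_add' φ ψ := by rw [Set.indicator_add', map_add]
  map_smul' r φ := by
    rw [RingHom.id_apply, ← map_smul]
    exact congrArg stepAverage (Set.indicator_const_smul U r φ)

variable {U : Set (ℤ × ℤ)} {φ ψ s v w : ℤ × ℤ → ℝ} {y e : ℤ × ℤ} {n : ℕ}

lemma stepAverage_apply (φ : ℤ × ℤ → ℝ) (y : ℤ × ℤ) :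
    stepAverage φ y = (1 / 4) * ∑ e ∈ dirs, φ (y + e) := rfl

lemma killedStep_apply (U : Set (ℤ × ℤ)) (φ : ℤ × ℤ → ℝ) :
    killedStep U φ = stepAverage (U.indicator φ) := rfl

lemma killedStep_pow_succ_apply (U : Set (ℤ × ℤ)) (n : ℕ) (φ : ℤ × ℤ → ℝ) :
    (killedStep U ^ (n + 1)) φ = killedStep U ((killedStep U ^ n) φ) := by
  rw [pow_succ', Module.End.mul_apply]

lemma sum_dirs {M : Type*} [AddCommMonoid M] (F : ℤ × ℤ → M) :
    ∑ e ∈ dirs, F e = F (1, 0) + (F (-1, 0) + (F (0, 1) + F (0, -1))) := by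
  simp [dirs]

lemma neg_one_le_snd_of_mem_dirs (he : e ∈ dirs) : -1 ≤ e.2 := by
  revert e
  decide

lemma stepAverage_one : stepAverage 1 = 1 := by
  ext
  norm_num [stepAverage_apply, show dirs.card = 4 from rfl]

lemma stepAverage_mono (h : ∀ e ∈ dirs, φ (y + e) ≤ ψ (y + e)) :
    stepAverage φ y ≤ stepAverage ψ y :=
  mul_le_mul_of_nonneg_left (Finset.sum_le_sum h) (by norm_num)

lemma killedStep_le_stepAverage (h : ∀ e ∈ dirs, y + e ∉ U → 0 ≤ φ (y + e)) :
    killedStep U φ y ≤ stepAverage φ y :=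
  stepAverage_mono fun e he => Set.indicator_apply_le' (fun _ => le_rfl) (h e he)

lemma stepAverage_le_killedStep (h : ∀ e ∈ dirs, y + e ∉ U → φ (y + e) ≤ 0) :
    stepAverage φ y ≤ killedStep U φ y :=
  stepAverage_mono fun e he => Set.le_indicator_apply (fun _ => le_rfl) (h e he)

lemma killedStep_mono (h : ∀ y ∈ U, φ y ≤ ψ y) (y : ℤ × ℤ) :
    killedStep U φ y ≤ killedStep U ψ y :=
  stepAverage_mono fun _ _ => Set.indicator_le_indicator' (h _)

lemma killedStep_pow_mono (h : ∀ y ∈ U, φ y ≤ ψ y) (n : ℕ) :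
    ∀ y ∈ U, (killedStep U ^ n) φ y ≤ (killedStep U ^ n) ψ y := by
  induction n with
  | zero => simpa using h
  | succ n ih =>
    intro y _
    simpa only [killedStep_pow_succ_apply] using killedStep_mono ih y

lemma killedStep_pow_nonneg_of_mem (h : ∀ y ∈ U, 0 ≤ φ y) (n : ℕ) (hy : y ∈ U) :
    0 ≤ (killedStep U ^ n) φ y := by
  simpa using killedStep_pow_mono (φ := 0) h n y hy

lemma killedStep_pow_nonneg (h : 0 ≤ φ) (n : ℕ) (y : ℤ × ℤ) :
    0 ≤ (killedStep U ^ n) φ y := by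
  cases n with
  | zero => exact h y
  | succ n =>
    rw [killedStep_pow_succ_apply]
    simpa using killedStep_mono (φ := 0)
      (fun z hz => killedStep_pow_nonneg_of_mem (fun z _ => h z) n hz) y

lemma mul_killedStep_pow_add_le (hφ : 0 ≤ φ) (he : e ∈ dirs) (hU : y + e ∈ U) (n : ℕ) :
    (1 / 4) * (killedStep U ^ n) φ (y + e) ≤ (killedStep U ^ (n + 1)) φ y := by
  rw [killedStep_pow_succ_apply, killedStep_apply, stepAverage_apply]
  gcongr
  calc (killedStep U ^ n) φ (y + e) = U.indicator ((killedStep U ^ n) φ) (y + e) :=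
        (Set.indicator_of_mem hU _).symm
    _ ≤ ∑ e ∈ dirs, U.indicator ((killedStep U ^ n) φ) (y + e) :=
        Finset.single_le_sum
          (fun _ _ => Set.indicator_nonneg (fun z _ => killedStep_pow_nonneg hφ n z) _) he

lemma killedStep_pow_add_sum_le (h : ∀ y ∈ U, killedStep U w y ≤ w y - s y) (n : ℕ) :
    ∀ y ∈ U, (killedStep U ^ n) w y + ∑ m ∈ Finset.range n, (killedStep U ^ m) s y ≤ w y := by
  induction n with
  | zero => simp
  | succ n ih =>
    intro y hy
    have hstep : killedStep U
        ((killedStep U ^ n) w + ∑ m ∈ Finset.range n, (killedStep U ^ m) s) y ≤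
          killedStep U w y :=
      killedStep_mono (fun z hz => by simpa using ih z hz) y
    simp only [map_add, map_sum, ← killedStep_pow_succ_apply, Pi.add_apply,
      Finset.sum_apply] at hstep
    rw [Finset.sum_range_succ', pow_zero, Module.End.one_apply]
    linarith [h y hy]

lemma le_killedStep_pow_add_sum (h : ∀ y ∈ U, v y - s y ≤ killedStep U v y) (n : ℕ) :
    ∀ y ∈ U, v y ≤ (killedStep U ^ n) v y + ∑ m ∈ Finset.range n, (killedStep U ^ m) s y := by
  intro y hy
  have hneg := killedStep_pow_add_sum_le (U := U) (w := -v) (s := -s)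
    (fun z hz => by simpa [add_comm] using h z hz) n y hy
  simp only [map_neg, Pi.neg_apply, Finset.sum_neg_distrib] at hneg
  linarith

end KilledWalk

section Green

variable {U : Set (ℤ × ℤ)} {s v w : ℤ × ℤ → ℝ} {y e : ℤ × ℤ}

/-- The Green potential `E_y[∑_{n < τ} s(S_n)]` of `s`, where `τ` is the first time `n ≥ 1` at
which the walk leaves `U`; it is `0` where the series diverges. -/
noncomputable def green (U : Set (ℤ × ℤ)) (s : ℤ × ℤ → ℝ) (y : ℤ × ℤ) : ℝ :=
  ∑' n : ℕ, (killedStep U ^ n) s y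

lemma summable_killedStep_pow (hs : 0 ≤ s) (hw : ∀ y ∈ U, 0 ≤ w y)
    (h : ∀ y ∈ U, killedStep U w y ≤ w y - s y) (y : ℤ × ℤ) :
    Summable fun n => (killedStep U ^ n) s y := by
  have hU : ∀ z ∈ U, Summable fun n => (killedStep U ^ n) s z := fun z hz =>
    summable_of_sum_range_le (fun n => killedStep_pow_nonneg hs n z) fun n => by
      linarith [killedStep_pow_add_sum_le h n z hz, killedStep_pow_nonneg_of_mem hw n hz]
  rw [← summable_nat_add_iff 1]
  simp only [killedStep_pow_succ_apply, killedStep_apply, stepAverage_apply]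
  refine (summable_sum fun e _ => ?_).mul_left _
  by_cases hye : y + e ∈ U
  · simpa only [Set.indicator_of_mem hye] using hU _ hye
  · simpa only [Set.indicator_of_notMem hye] using summable_zero

lemma le_green {K : ℝ} (hs : 0 ≤ s) (hsum : Summable fun n => (killedStep U ^ n) s y)
    (hesc : Tendsto (fun n => (killedStep U ^ n) 1 y) atTop (nhds 0))
    (hv : ∀ y ∈ U, v y - s y ≤ killedStep U v y) (hK : ∀ y ∈ U, v y ≤ K) (hy : y ∈ U) :
    v y ≤ green U s y := by
  have hbound (n : ℕ) : v y ≤ K * (killedStep U ^ n) 1 y + green U s y := by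
    have hpow := killedStep_pow_mono (ψ := K • 1) (fun z hz => by simpa using hK z hz) n y hy
    rw [map_smul, Pi.smul_apply, smul_eq_mul] at hpow
    have hpartial : ∑ m ∈ Finset.range n, (killedStep U ^ m) s y ≤ green U s y :=
      hsum.sum_le_tsum _ fun m _ => killedStep_pow_nonneg hs m y
    linarith [le_killedStep_pow_add_sum hv n y hy]
  simpa using ge_of_tendsto' ((hesc.const_mul K).add_const (green U s y)) hbound

lemma mul_green_add_le (hs : 0 ≤ s) (hsum : ∀ y, Summable fun n => (killedStep U ^ n) s y)
    (he : e ∈ dirs) (hU : y + e ∈ U) :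
    (1 / 4) * green U s (y + e) ≤ green U s y := by
  calc (1 / 4) * green U s (y + e) = ∑' n, (1 / 4) * (killedStep U ^ n) s (y + e) :=
        tsum_mul_left.symm
    _ ≤ ∑' n, (killedStep U ^ (n + 1)) s y :=
        ((hsum _).mul_left _).tsum_le_tsum (fun n => mul_killedStep_pow_add_le hs he hU n)
          ((summable_nat_add_iff 1).2 (hsum y))
    _ ≤ green U s y := by
        rw [green, (hsum y).tsum_eq_zero_add]
        exact le_add_of_nonneg_left (killedStep_pow_nonneg hs 0 y)

lemma pow_mul_green_le_green_of_column (hs : 0 ≤ s)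
    (hsum : ∀ y, Summable fun n => (killedStep U ^ n) s y) {a b : ℤ}
    (hcol : ∀ j, b < j → (a, j) ∈ U) (k : ℕ) :
    (1 / 4) ^ k * green U s (a, b + k) ≤ green U s (a, b) := by
  induction k with
  | zero => simp
  | succ k ih =>
    have hup : (a, b + k) + (0, 1) = (a, b + (k + 1 : ℕ)) := by simp [add_assoc]
    have hstep := mul_green_add_le (y := (a, b + k)) hs hsum (e := (0, 1)) (by decide)
      (by rw [hup]; exact hcol _ (by omega))
    rw [hup] at hstep
    calc (1 / 4) ^ (k + 1) * green U s (a, b + (k + 1 : ℕ))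
        = (1 / 4) ^ k * ((1 / 4) * green U s (a, b + (k + 1 : ℕ))) := by ring
      _ ≤ (1 / 4) ^ k * green U s (a, b + k) := by gcongr
      _ ≤ green U s (a, b) := ih

end Green

section HalfPlane

variable {U : Set (ℤ × ℤ)} {g : ℤ × ℤ → ℝ} {y e : ℤ × ℤ}

/-- The indicator function of `U ∩ L_j`, the source term of the Green potentials below. -/
noncomputable def lineIndicator (U : Set (ℤ × ℤ)) (j : ℤ) : ℤ × ℤ → ℝ := (U ∩ lineH j).indicator 1

lemma lineIndicator_nonneg (U : Set (ℤ × ℤ)) (j : ℤ) : 0 ≤ lineIndicator U j :=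
  Set.indicator_nonneg fun _ _ => zero_le_one

lemma lineIndicator_of_mem (hy : y ∈ U) (j : ℤ) :
    lineIndicator U j y = if y.2 = j then 1 else 0 := by
  classical
  simp [lineIndicator, Set.indicator_apply, hy, lineH]

lemma snd_add_nonneg (hy : 0 < y.2) (he : e ∈ dirs) : 0 ≤ (y + e).2 := by
  have := neg_one_le_snd_of_mem_dirs he
  rw [Prod.snd_add]
  omega

lemma stepAverage_snd : stepAverage (fun z => (z.2 : ℝ)) = fun z => (z.2 : ℝ) := by
  ext z
  simp only [stepAverage_apply, sum_dirs, Prod.snd_add, Int.cast_add, Int.cast_zero, Int.cast_one,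
    Int.cast_neg]
  ring

lemma stepAverage_min_snd (N : ℤ) (y : ℤ × ℤ) :
    stepAverage (fun z => (min z.2 N : ℝ)) y =
      min (y.2 : ℝ) N - if y.2 = N then 1 / 4 else 0 := by
  have hmin : min (y.2 + 1) N + min (y.2 + -1) N = 2 * min y.2 N - if y.2 = N then 1 else 0 := by
    split_ifs <;> omega
  have hmin' : min ((y.2 : ℝ) + 1) N + min ((y.2 : ℝ) + -1) N =
      2 * min (y.2 : ℝ) N - if y.2 = N then 1 else 0 := by
    exact_mod_cast hmin
  simp only [stepAverage_apply, sum_dirs, Prod.snd_add, Int.cast_add, Int.cast_zero, add_zero,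
    Int.cast_one, Int.cast_neg]
  split_ifs at hmin' ⊢ <;> linarith

lemma killedStep_pow_snd_le (hU : ∀ y ∈ U, 0 < y.2) (n : ℕ) (hy : y ∈ U) :
    (killedStep U ^ n) (fun z => (z.2 : ℝ)) y ≤ y.2 := by
  have hstep (z : ℤ × ℤ) (hz : z ∈ U) :
      killedStep U (fun z => (z.2 : ℝ)) z ≤ (z.2 : ℝ) - (0 : ℤ × ℤ → ℝ) z := by
    rw [Pi.zero_apply, sub_zero, ← congrFun stepAverage_snd z]
    exact killedStep_le_stepAverage fun e he _ => by exact_mod_cast snd_add_nonneg (hU z hz) he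
  simpa using killedStep_pow_add_sum_le hstep n y hy

-- `4 * min y.2 N` is superharmonic with deficit exactly the indicator of `L_N`.
lemma summable_killedStep_pow_lineIndicator (hU : ∀ y ∈ U, 0 < y.2) {N : ℤ} (hN : 0 < N)
    (y : ℤ × ℤ) : Summable fun n => (killedStep U ^ n) (lineIndicator U N) y := by
  have hpos {z : ℤ × ℤ} (hz : 0 ≤ z.2) : 0 ≤ ((4 : ℝ) • fun z : ℤ × ℤ => (min z.2 N : ℝ)) z := by
    have : (0 : ℝ) ≤ z.2 := by exact_mod_cast hz
    have : (0 : ℝ) < N := by exact_mod_cast hN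
    simp only [Pi.smul_apply, smul_eq_mul]
    positivity
  refine summable_killedStep_pow (lineIndicator_nonneg U N) (fun z hz => hpos (hU z hz).le)
    (fun z hz => ?_) y
  refine (killedStep_le_stepAverage fun e he _ => hpos (snd_add_nonneg (hU z hz) he)).trans_eq ?_
  rw [map_smul, lineIndicator_of_mem hz]
  simp only [Pi.smul_apply, smul_eq_mul, stepAverage_min_snd]
  split_ifs <;> ring

lemma one_le_sum_lineIndicator_add (hU : ∀ y ∈ U, 0 < y.2) {M : ℕ} (hM : 0 < M) (hy : y ∈ U) :
    1 ≤ ∑ j ∈ Finset.range M, lineIndicator U (j + 1) y + (M : ℝ)⁻¹ * y.2 := by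
  have hy0 := hU y hy
  have : (0 : ℝ) < y.2 := by exact_mod_cast hy0
  have hM' : (0 : ℝ) < M := by exact_mod_cast hM
  have hterm : ∀ j ∈ Finset.range M, 0 ≤ lineIndicator U (j + 1) y :=
    fun j _ => lineIndicator_nonneg U _ y
  rcases le_or_gt y.2 M with hyM | hyM
  · have hmem : (y.2 - 1).toNat ∈ Finset.range M := by rw [Finset.mem_range]; omega
    have hone : lineIndicator U ((y.2 - 1).toNat + 1) y = 1 := by
      rw [lineIndicator_of_mem hy, if_pos (by omega)]
    have := Finset.single_le_sum hterm hmem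
    have : 0 ≤ (M : ℝ)⁻¹ * y.2 := by positivity
    linarith
  · have : 1 ≤ (M : ℝ)⁻¹ * y.2 := by
      rw [inv_mul_eq_div, one_le_div hM']
      exact_mod_cast hyM.le
    linarith [Finset.sum_nonneg hterm]

-- The killed walk spends finite mean time on each line, and by optional stopping of the height it
-- is above level `M` at time `n` with probability at most `y.2 / M`.
lemma tendsto_killedStep_pow_one (hU : ∀ y ∈ U, 0 < y.2) (hy : y ∈ U) :
    Tendsto (fun n => (killedStep U ^ n) 1 y) atTop (nhds 0) := by
  have hbound {M : ℕ} (hM : 0 < M) (n : ℕ) : (killedStep U ^ n) 1 y ≤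
      ∑ j ∈ Finset.range M, (killedStep U ^ n) (lineIndicator U (j + 1)) y +
        (M : ℝ)⁻¹ * y.2 := by
    have hpow := killedStep_pow_mono (φ := 1) (ψ := ∑ j ∈ Finset.range M, lineIndicator U (j + 1) +
      (M : ℝ)⁻¹ • fun z : ℤ × ℤ => (z.2 : ℝ))
      (fun z hz => by simpa using one_le_sum_lineIndicator_add hU hM hz) n y hy
    simp only [map_add, map_sum, map_smul, Pi.add_apply, Finset.sum_apply, Pi.smul_apply,
      smul_eq_mul] at hpow
    refine hpow.trans ?_
    gcongr
    exact killedStep_pow_snd_le hU n hy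
  have hlines (M : ℕ) : Tendsto (fun n => ∑ j ∈ Finset.range M,
      (killedStep U ^ n) (lineIndicator U (j + 1)) y + (M : ℝ)⁻¹ * y.2) atTop
      (nhds ((M : ℝ)⁻¹ * y.2)) := by
    simpa using (tendsto_finsetSum (Finset.range M) fun j _ =>
      (summable_killedStep_pow_lineIndicator hU (N := (j : ℤ) + 1)
        (by omega) y).tendsto_atTop_zero).add_const ((M : ℝ)⁻¹ * y.2)
  refine tendsto_order.2 ⟨fun ε hε => .of_forall fun n =>
    hε.trans_le (killedStep_pow_nonneg zero_le_one n y), fun ε hε => ?_⟩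
  have hheight : Tendsto (fun M : ℕ => (M : ℝ)⁻¹ * y.2) atTop (nhds 0) := by
    simpa using tendsto_inv_atTop_nhds_zero_nat.mul_const (y.2 : ℝ)
  obtain ⟨M, hMε, hM⟩ := ((hheight.eventually_lt_const hε).and (eventually_gt_atTop 0)).exists
  filter_upwards [(hlines M).eventually_lt_const hMε] with n hn
  exact (hbound hM n).trans_lt hn

lemma four_mul_min_sub_le_green (hU : ∀ y ∈ U, 0 < y.2) (hg : ∀ y ∈ U, 0 ≤ g y)
    (hsup : ∀ y ∈ U, stepAverage g y ≤ g y) (hbd : ∀ y ∉ U, 0 ≤ y.2 → (y.2 : ℝ) ≤ g y)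
    {N : ℤ} (hN : 0 < N) (hy : y ∈ U) :
    4 * (min (y.2 : ℝ) N - g y) ≤ green U (lineIndicator U N) y := by
  refine le_green (v := (4 : ℝ) • ((fun z => (min z.2 N : ℝ)) - g)) (K := 4 * N)
    (lineIndicator_nonneg U N) (summable_killedStep_pow_lineIndicator hU hN y)
    (tendsto_killedStep_pow_one hU hy) (fun z hz => ?_) (fun z hz => ?_) hy
  · refine le_trans ?_ (stepAverage_le_killedStep fun e he hze => ?_)
    · rw [map_smul, map_sub, lineIndicator_of_mem hz]
      simp only [Pi.smul_apply, Pi.sub_apply, smul_eq_mul, stepAverage_min_snd]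
      split_ifs <;> linarith [hsup z hz]
    · have := hbd _ hze (snd_add_nonneg (hU z hz) he)
      simp only [Pi.smul_apply, Pi.sub_apply, smul_eq_mul]
      linarith [min_le_left ((z + e).2 : ℝ) N]
  · simp only [Pi.smul_apply, Pi.sub_apply, smul_eq_mul]
    linarith [min_le_right (z.2 : ℝ) N, hg z hz]

end HalfPlane

section Reversal

variable {U Z A B : Set (ℤ × ℤ)} {x z e : ℤ × ℤ} {n : ℕ}

lemma killedStep_single_of_mem (hz : z ∈ U) :
    killedStep U (Pi.single z 1) = (1 / 4 : ℝ) • ∑ e ∈ dirs, Pi.single (z + e) 1 := by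
  classical
  ext x
  have hneg : ∀ e ∈ dirs, -e ∈ dirs := by decide
  have hind : U.indicator (Pi.single z 1 : ℤ × ℤ → ℝ) = Pi.single z 1 := by
    rw [Set.indicator_eq_self, Pi.support_single_of_ne one_ne_zero, Set.singleton_subset_iff]
    exact hz
  rw [killedStep_apply, hind, stepAverage_apply, Pi.smul_apply, Finset.sum_apply, smul_eq_mul]
  congr 1
  refine Finset.sum_nbij' Neg.neg Neg.neg hneg hneg (fun _ _ => neg_neg _) (fun _ _ => neg_neg _)
    fun e _ => ?_
  simp only [Pi.single_apply, ← sub_eq_add_neg, eq_sub_iff_add_eq]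

lemma killedStep_single_of_notMem (hz : z ∉ U) : killedStep U (Pi.single z 1) = 0 := by
  classical
  have hind : U.indicator (Pi.single z 1 : ℤ × ℤ → ℝ) = 0 := by
    rw [Set.indicator_eq_zero', Pi.support_single_of_ne one_ne_zero, Set.disjoint_singleton_left]
    exact hz
  rw [killedStep_apply, hind, map_zero]

lemma hasSum_killedStep_pow_single (U Z : Set (ℤ × ℤ)) (n : ℕ) (x : ℤ × ℤ) :
    HasSum (fun z : Z => (killedStep U ^ n) (Pi.single (z : ℤ × ℤ) 1) x)
      ((killedStep U ^ n) (Z.indicator 1) x) := by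
  classical
  induction n generalizing x with
  | zero =>
    simp only [pow_zero, Module.End.one_apply]
    by_cases hx : x ∈ Z
    · rw [Set.indicator_of_mem hx, Pi.one_apply]
      convert hasSum_ite_eq (⟨x, hx⟩ : Z) (1 : ℝ) using 2 with z
      simp only [Pi.single_apply, Subtype.ext_iff, eq_comm]
    · rw [Set.indicator_of_notMem hx]
      convert hasSum_zero with z
      exact Pi.single_eq_of_ne (fun h : x = z => hx (h ▸ z.2)) 1
  | succ n ih =>
    simp only [killedStep_pow_succ_apply, killedStep_apply, stepAverage_apply]
    refine (hasSum_sum fun e _ => ?_).mul_left _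
    by_cases hxe : x + e ∈ U
    · simpa only [Set.indicator_of_mem hxe] using ih (x + e)
    · simpa only [Set.indicator_of_notMem hxe] using hasSum_zero

/-- The event `{τ̄_A = n, S_n = x}` for the walk with increments `σ` started at `z`. -/
def FirstHits (A : Set (ℤ × ℤ)) (x z : ℤ × ℤ) {n : ℕ} (σ : Fin n → ℤ × ℤ) : Prop :=
  pos z σ n = x ∧ x ∈ A ∧ ∀ m < n, pos z σ m ∉ A

lemma pos_zero (z : ℤ × ℤ) (σ : Fin n → ℤ × ℤ) : pos z σ 0 = z := by
  simp [pos]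

lemma pos_cons (z e : ℤ × ℤ) (σ : Fin n → ℤ × ℤ) (m : ℕ) :
    pos z (Fin.cons e σ : Fin (n + 1) → ℤ × ℤ) (m + 1) = pos (z + e) σ m := by
  simp [pos, Finset.sum_filter, Fin.sum_univ_succ, add_assoc]

lemma firstHits_cons (A : Set (ℤ × ℤ)) (x z e : ℤ × ℤ) (σ : Fin n → ℤ × ℤ) :
    FirstHits A x z (Fin.cons e σ : Fin (n + 1) → ℤ × ℤ) ↔ z ∉ A ∧ FirstHits A x (z + e) σ := by
  simp only [FirstHits, Nat.forall_lt_succ_left, pos_cons, pos_zero]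
  tauto

lemma stepProb_nonneg (n : ℕ) (E : (Fin n → ℤ × ℤ) → Prop) : 0 ≤ stepProb n E := by
  unfold stepProb
  positivity

lemma stepProb_succ (E : (Fin (n + 1) → ℤ × ℤ) → Prop) :
    stepProb (n + 1) E = (1 / 4) * ∑ e ∈ dirs, stepProb n fun σ => E (Fin.cons e σ) := by
  have hcoe (s : Fin (n + 1) → dirs) : (fun i => (s i : ℤ × ℤ)) =
      Fin.cons (s 0 : ℤ × ℤ) fun i => (s (Fin.succ i) : ℤ × ℤ) :=
    (Fin.cons_self_tail fun i => (s i : ℤ × ℤ)).symm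
  let firstStep : {s : Fin (n + 1) → dirs // E fun i => (s i : ℤ × ℤ)} ≃
      Σ e : dirs, {s : Fin n → dirs // E (Fin.cons (e : ℤ × ℤ) fun i => (s i : ℤ × ℤ))} :=
    { toFun s := ⟨s.1 0, fun i => s.1 i.succ, by rw [← hcoe]; exact s.2⟩
      invFun s := ⟨Fin.cons s.1 s.2.1, by rw [hcoe]; exact s.2.2⟩
      left_inv s := Subtype.ext (Fin.cons_self_tail s.1)
      right_inv _ := rfl }
  have hcard := Nat.card_congr firstStep
  rw [Nat.card_sigma] at hcard
  rw [stepProb, hcard, Nat.cast_sum, pow_succ,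
    ← Finset.sum_coe_sort dirs fun e => stepProb n fun σ => E (Fin.cons e σ)]
  simp only [stepProb, ← Finset.sum_div]
  ring

lemma stepProb_firstHits_zero (A : Set (ℤ × ℤ)) (hx : x ∈ A) (z : ℤ × ℤ) :
    stepProb 0 (FirstHits A x z) = (Pi.single z 1 : ℤ × ℤ → ℝ) x := by
  by_cases hxz : x = z
  · subst hxz; simp [stepProb, FirstHits, pos_zero, hx]
  · simp [stepProb, FirstHits, pos_zero, hxz, Ne.symm hxz]

lemma stepProb_firstHits_succ_of_notMem (hz : z ∉ A) (x : ℤ × ℤ) (n : ℕ) :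
    stepProb (n + 1) (FirstHits A x z) =
      (1 / 4) * ∑ e ∈ dirs, stepProb n (FirstHits A x (z + e)) := by
  simp only [stepProb_succ, firstHits_cons, hz, not_false_eq_true, true_and]

lemma stepProb_firstHits_succ_of_mem (hz : z ∈ A) (x : ℤ × ℤ) (n : ℕ) :
    stepProb (n + 1) (FirstHits A x z) = 0 := by
  rw [stepProb_succ]
  simp [firstHits_cons, hz, stepProb]

/-- The points of the open upper half plane off `B`, where the walk is not yet stopped. -/
def freeRegion (B : Set (ℤ × ℤ)) : Set (ℤ × ℤ) := {y | 0 < y.2 ∧ y ∉ B}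

-- Steps are symmetric, so a path from `z` to `x` and its reversal have the same probability.
lemma stepProb_firstHits_eq (hx : x ∈ B) (n : ℕ) (hz : 0 ≤ z.2) :
    stepProb n (FirstHits (B ∪ lineH 0) x z) =
      (killedStep (freeRegion B) ^ n) (Pi.single z 1) x := by
  classical
  induction n generalizing z with
  | zero => simpa using stepProb_firstHits_zero _ (.inl hx) z
  | succ n ih =>
    rw [pow_succ, Module.End.mul_apply]
    by_cases hzU : z ∈ freeRegion B
    · have hzA : z ∉ B ∪ lineH 0 := by
        rintro (h | h)
        exacts [hzU.2 h, hzU.1.ne' h]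
      rw [stepProb_firstHits_succ_of_notMem hzA, killedStep_single_of_mem hzU, map_smul, map_sum,
        Pi.smul_apply, Finset.sum_apply, smul_eq_mul]
      exact congrArg _ (Finset.sum_congr rfl fun e he => ih (snd_add_nonneg hzU.1 he))
    · have hzA : z ∈ B ∪ lineH 0 := by
        by_contra h
        exact hzU ⟨hz.lt_of_ne fun h0 => h (.inr h0.symm), fun hB => h (.inl hB)⟩
      rw [stepProb_firstHits_succ_of_mem hzA, killedStep_single_of_notMem hzU, map_zero,
        Pi.zero_apply]

lemma harm_nonneg (B : Set (ℤ × ℤ)) (N : ℕ) (x : ℤ × ℤ) : 0 ≤ harm B N x :=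
  tsum_nonneg fun _ => tsum_nonneg fun n => stepProb_nonneg n _

lemma harm_eq_green {N : ℕ} (hN : 0 < N) (hx : x ∈ B) :
    harm B N x = green (freeRegion B) (lineIndicator (freeRegion B) N) x := by
  set U := freeRegion B
  have hline : lineH (N : ℤ) \ B = U ∩ lineH N := by
    ext ⟨a, b⟩
    simp only [lineH, U, freeRegion, Set.mem_sdiff, Set.mem_inter_iff, Set.mem_ofPred_eq]
    grind
  have hhit (z : ↥(lineH (N : ℤ) \ B)) : hitProb z (B ∪ lineH 0) x =
      ∑' n, (killedStep U ^ n) (Pi.single (z : ℤ × ℤ) 1) x :=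
    tsum_congr fun n => stepProb_firstHits_eq hx n
      (by rw [show (z : ℤ × ℤ).2 = N from z.2.1]; positivity)
  have hsum (n : ℕ) : HasSum
      (fun z : ↥(lineH (N : ℤ) \ B) => (killedStep U ^ n) (Pi.single (z : ℤ × ℤ) 1) x)
      ((killedStep U ^ n) (lineIndicator U N) x) := by
    rw [lineIndicator, ← hline]
    exact hasSum_killedStep_pow_single U _ n x
  have hsummable : Summable (Function.uncurry fun (n : ℕ) (z : ↥(lineH (N : ℤ) \ B)) =>
      (killedStep U ^ n) (Pi.single (z : ℤ × ℤ) 1) x) := by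
    refine (summable_prod_of_nonneg fun p => killedStep_pow_nonneg
      (Pi.single_nonneg.2 zero_le_one) p.1 x).2 ⟨fun n => (hsum n).summable, ?_⟩
    simpa only [Function.uncurry_apply_pair, (hsum _).tsum_eq] using
      summable_killedStep_pow_lineIndicator (fun y hy => hy.1) (by exact_mod_cast hN) x
  calc harm B N x
      = ∑' (z : ↥(lineH (N : ℤ) \ B)) (n : ℕ), (killedStep U ^ n) (Pi.single (z : ℤ × ℤ) 1) x :=
        tsum_congr hhit
    _ = ∑' (n : ℕ) (z : ↥(lineH (N : ℤ) \ B)), (killedStep U ^ n) (Pi.single (z : ℤ × ℤ) 1) x :=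
        hsummable.tsum_comm
    _ = green U (lineIndicator U N) x := tsum_congr fun n => (hsum n).tsum_eq

end Reversal

section Barrier

variable {lam c θ β : ℝ} {y : ℤ × ℤ} {k : ℕ}

/-- The mode `cos (λ x) exp (-μ h)` at `(x, h)`, with `μ ≥ 0` chosen so that
`cosh μ + cos λ = 2`, which is what makes it harmonic for the simple random walk. -/
noncomputable def harmonicMode (lam : ℝ) (y : ℤ × ℤ) : ℝ :=
  Real.cos (lam * y.1) * Real.exp (-(Real.arcosh (2 - Real.cos lam) * y.2))

lemma one_le_two_sub_cos (lam : ℝ) : 1 ≤ 2 - Real.cos lam := by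
  linarith [Real.cos_le_one lam]

lemma one_add_sq_div_two_le_cosh (t : ℝ) : 1 + t ^ 2 / 2 ≤ Real.cosh t := by
  have hsinh : |t / 2| ≤ |Real.sinh (t / 2)| := by
    rw [Real.abs_sinh]
    exact Real.self_le_sinh_iff.2 (abs_nonneg _)
  have hcosh := Real.cosh_two_mul (t / 2)
  rw [mul_div_cancel₀ t two_ne_zero, Real.cosh_sq] at hcosh
  linarith [sq_le_sq.2 hsinh]

lemma arcosh_two_sub_cos_le (h : 0 ≤ lam) : Real.arcosh (2 - Real.cos lam) ≤ lam := by
  have hcosh : 2 - Real.cos lam ≤ Real.cosh lam := by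
    linarith [Real.one_sub_sq_div_two_le_cos (x := lam), one_add_sq_div_two_le_cosh lam]
  calc Real.arcosh (2 - Real.cos lam) ≤ Real.arcosh (Real.cosh lam) :=
        (Real.arcosh_le_arcosh (zero_lt_one.trans_le (one_le_two_sub_cos lam))
          (Real.cosh_pos lam)).2 hcosh
    _ = lam := Real.arcosh_cosh h

lemma stepAverage_harmonicMode (lam : ℝ) :
    stepAverage (harmonicMode lam) = harmonicMode lam := by
  ext y
  set μ := Real.arcosh (2 - Real.cos lam)
  have hμ : (Real.exp μ + Real.exp (-μ)) / 2 = 2 - Real.cos lam := by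
    rw [← Real.cosh_eq, Real.cosh_arcosh (one_le_two_sub_cos lam)]
  have hup : Real.exp (-(μ * (y.2 + 1))) = Real.exp (-(μ * y.2)) * Real.exp (-μ) := by
    rw [← Real.exp_add]; ring_nf
  have hdown : Real.exp (-(μ * (y.2 + -1))) = Real.exp (-(μ * y.2)) * Real.exp μ := by
    rw [← Real.exp_add]; ring_nf
  have hright : Real.cos (lam * (y.1 + 1)) =
      Real.cos (lam * y.1) * Real.cos lam - Real.sin (lam * y.1) * Real.sin lam := by
    rw [← Real.cos_add]; ring_nf
  have hleft : Real.cos (lam * (y.1 + -1)) =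
      Real.cos (lam * y.1) * Real.cos lam + Real.sin (lam * y.1) * Real.sin lam := by
    rw [← Real.cos_sub]; ring_nf
  simp only [stepAverage_apply, sum_dirs, harmonicMode, Prod.fst_add, Prod.snd_add, Int.cast_add,
    Int.cast_zero, add_zero, Int.cast_one, Int.cast_neg]
  rw [hup, hdown, hright, hleft]
  linear_combination (1 / 2) * Real.cos (lam * y.1) * Real.exp (-(μ * y.2)) * hμ

lemma exp_neg_arcosh_mul_le_one (lam : ℝ) (hy : 0 ≤ y.2) :
    Real.exp (-(Real.arcosh (2 - Real.cos lam) * y.2)) ≤ 1 := by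
  have : (0 : ℝ) ≤ y.2 := by exact_mod_cast hy
  have := Real.arcosh_nonneg (one_le_two_sub_cos lam)
  rw [Real.exp_le_one_iff, neg_nonpos]
  positivity

lemma harmonicMode_le (hy : 0 ≤ y.2) (hc : 0 ≤ c) (h : Real.cos (lam * y.1) ≤ c) :
    harmonicMode lam y ≤ c :=
  calc harmonicMode lam y ≤ c * 1 :=
        mul_le_mul h (exp_neg_arcosh_mul_le_one lam hy) (Real.exp_pos _).le hc
    _ = c := mul_one c

lemma neg_one_le_harmonicMode (lam : ℝ) (hy : 0 ≤ y.2) : -1 ≤ harmonicMode lam y :=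
  calc (-1 : ℝ) = -1 * 1 := (mul_one _).symm
    _ ≤ -1 * Real.exp (-(Real.arcosh (2 - Real.cos lam) * y.2)) :=
        mul_le_mul_of_nonpos_left (exp_neg_arcosh_mul_le_one lam hy) (by norm_num)
    _ ≤ harmonicMode lam y :=
        mul_le_mul_of_nonneg_right (Real.neg_one_le_cos _) (Real.exp_pos _).le

lemma one_sub_harmonicMode_le (h : 0 ≤ lam) (hy : 0 ≤ y.2) :
    1 - harmonicMode lam y ≤ (lam * y.1) ^ 2 / 2 + lam * y.2 := by
  set E := Real.exp (-(Real.arcosh (2 - Real.cos lam) * y.2))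
  have hE : 1 - E ≤ lam * y.2 := by
    have hy' : (0 : ℝ) ≤ y.2 := by exact_mod_cast hy
    have := mul_le_mul_of_nonneg_right (arcosh_two_sub_cos_le h) hy'
    linarith [Real.add_one_le_exp (-(Real.arcosh (2 - Real.cos lam) * y.2))]
  have hcos : 1 - Real.cos (lam * y.1) ≤ (lam * y.1) ^ 2 / 2 := by
    linarith [Real.one_sub_sq_div_two_le_cos (x := lam * y.1)]
  calc 1 - harmonicMode lam y
      = (1 - Real.cos (lam * y.1)) + (1 - E) -
          (1 - Real.cos (lam * y.1)) * (1 - E) := by rw [harmonicMode]; ring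
    _ ≤ (1 - Real.cos (lam * y.1)) + (1 - E) :=
        sub_le_self _ (mul_nonneg (sub_nonneg.2 (Real.cos_le_one _))
          (sub_nonneg.2 (exp_neg_arcosh_mul_le_one lam hy)))
    _ ≤ (lam * y.1) ^ 2 / 2 + lam * y.2 := add_le_add hcos hE

/-- The `k`-th term of the lacunary series `barrier`: frequency `2⁻ᵏ`, weight `θᵏ`. -/
noncomputable def barrierTerm (θ : ℝ) (k : ℕ) : ℤ × ℤ → ℝ :=
  θ ^ k • (1 - harmonicMode ((1 / 2) ^ k))

/-- The barrier function `∑ₖ θᵏ (1 - cos (2⁻ᵏ x) exp (-μₖ h))`.  For `θ = 2 ^ β` with `0 < β < 1`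
it is nonnegative and harmonic in the upper half plane, grows at least like `|x| ^ β`, and grows
sublinearly along vertical lines. -/
noncomputable def barrier (θ : ℝ) (y : ℤ × ℤ) : ℝ := ∑' k, barrierTerm θ k y

lemma barrierTerm_apply (θ : ℝ) (k : ℕ) (y : ℤ × ℤ) :
    barrierTerm θ k y = θ ^ k * (1 - harmonicMode ((1 / 2) ^ k) y) := rfl

lemma stepAverage_barrierTerm (θ : ℝ) (k : ℕ) :
    stepAverage (barrierTerm θ k) = barrierTerm θ k := by
  rw [barrierTerm, map_smul, map_sub, stepAverage_one, stepAverage_harmonicMode]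

lemma le_barrierTerm (hθ : 0 ≤ θ) (hy : 0 ≤ y.2) (hc : 0 ≤ c)
    (h : Real.cos ((1 / 2) ^ k * y.1) ≤ c) : θ ^ k * (1 - c) ≤ barrierTerm θ k y := by
  rw [barrierTerm_apply]
  gcongr
  exact harmonicMode_le hy hc h

lemma barrierTerm_nonneg (hθ : 0 ≤ θ) (hy : 0 ≤ y.2) (k : ℕ) : 0 ≤ barrierTerm θ k y := by
  simpa using le_barrierTerm hθ hy zero_le_one (Real.cos_le_one _)

lemma barrierTerm_le_pow_mul_two (hθ : 0 ≤ θ) (hy : 0 ≤ y.2) (k : ℕ) :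
    barrierTerm θ k y ≤ θ ^ k * 2 := by
  rw [barrierTerm_apply]
  gcongr
  linarith [neg_one_le_harmonicMode ((1 / 2) ^ k) hy]

lemma barrierTerm_le (hθ : 0 ≤ θ) (hy : 0 ≤ y.2) (k : ℕ) :
    barrierTerm θ k y ≤ (θ / 2) ^ k * ((y.1 : ℝ) ^ 2 + y.2) := by
  set l : ℝ := (1 / 2) ^ k
  have hl : 0 ≤ l := by positivity
  have hl1 : l ≤ 1 := pow_le_one₀ (by norm_num) (by norm_num)
  have hsq : (l * y.1) ^ 2 / 2 ≤ l * (y.1 : ℝ) ^ 2 := by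
    nlinarith [mul_nonneg (mul_nonneg hl (sub_nonneg.2 hl1)) (sq_nonneg (y.1 : ℝ)),
      mul_nonneg hl (sq_nonneg (y.1 : ℝ))]
  calc barrierTerm θ k y
      ≤ θ ^ k * ((l * y.1) ^ 2 / 2 + l * y.2) := by
        rw [barrierTerm_apply]
        gcongr
        exact one_sub_harmonicMode_le hl hy
    _ ≤ θ ^ k * (l * (y.1 : ℝ) ^ 2 + l * y.2) := by gcongr
    _ = (θ / 2) ^ k * ((y.1 : ℝ) ^ 2 + y.2) := by
        rw [div_eq_mul_one_div θ 2, mul_pow]; ring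

lemma summable_half_pow (hθ : 0 ≤ θ) (hθ2 : θ < 2) : Summable fun k : ℕ => (θ / 2) ^ k :=
  summable_geometric_of_lt_one (by linarith) (by linarith)

lemma summable_barrierTerm (hθ : 0 ≤ θ) (hθ2 : θ < 2) (hy : 0 ≤ y.2) :
    Summable fun k => barrierTerm θ k y :=
  .of_nonneg_of_le (barrierTerm_nonneg hθ hy) (barrierTerm_le hθ hy)
    ((summable_half_pow hθ hθ2).mul_right _)

lemma barrier_nonneg (hθ : 0 ≤ θ) (hy : 0 ≤ y.2) : 0 ≤ barrier θ y :=
  tsum_nonneg (barrierTerm_nonneg hθ hy)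

lemma stepAverage_barrier (hθ : 0 ≤ θ) (hθ2 : θ < 2) (hy : 0 < y.2) :
    stepAverage (barrier θ) y = barrier θ y := by
  simp only [stepAverage_apply, barrier]
  rw [← Summable.tsum_finsetSum fun e he => summable_barrierTerm hθ hθ2 (snd_add_nonneg hy he),
    ← tsum_mul_left]
  exact tsum_congr fun k => congrFun (stepAverage_barrierTerm θ k) y

lemma cos_le_cos_one_of_mem_Icc {t : ℝ} (ht : |t| ∈ Set.Icc 1 2) : Real.cos t ≤ Real.cos 1 := by
  rw [← Real.cos_abs]
  exact Real.cos_le_cos_of_nonneg_of_le_pi zero_le_one (by linarith [ht.2, Real.pi_gt_three]) ht.1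

-- Among the dyadic frequencies, `2⁻ᵏ` with `2ᵏ ≤ |x| < 2ᵏ⁺¹` alone contributes order `|x| ^ β`.
lemma one_sub_cos_one_mul_rpow_le_barrier (hβ : 0 < β) (hβ1 : β < 1) (hy : 0 ≤ y.2) :
    (1 - Real.cos 1) * |(y.1 : ℝ)| ^ β ≤ 2 ^ β * barrier (2 ^ β) y := by
  have hθ : (0 : ℝ) ≤ 2 ^ β := by positivity
  have hθ2 : (2 : ℝ) ^ β < 2 := Real.rpow_lt_self_of_one_lt one_lt_two hβ1
  have hcos : 0 ≤ 1 - Real.cos 1 := sub_nonneg.2 (Real.cos_le_one 1)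
  rcases eq_or_ne y.1 0 with h0 | h0
  · rw [h0, Int.cast_zero, abs_zero, Real.zero_rpow hβ.ne', mul_zero]
    exact mul_nonneg hθ (barrier_nonneg hθ hy)
  · obtain ⟨k, hk, hk'⟩ : ∃ k : ℕ, (2 : ℝ) ^ k ≤ |(y.1 : ℝ)| ∧ |(y.1 : ℝ)| < 2 ^ (k + 1) :=
      exists_nat_pow_near (by exact_mod_cast Int.one_le_abs h0) one_lt_two
    have hmem : |(1 / 2) ^ k * (y.1 : ℝ)| ∈ Set.Icc 1 2 := by
      rw [pow_succ] at hk'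
      rw [abs_mul, abs_of_pos (by positivity), one_div_pow, one_div_mul_eq_div, Set.mem_Icc,
        one_le_div (by positivity), div_le_iff₀ (by positivity)]
      exact ⟨hk, by linarith⟩
    calc (1 - Real.cos 1) * |(y.1 : ℝ)| ^ β
        ≤ (1 - Real.cos 1) * ((2 : ℝ) ^ (k + 1)) ^ β := by gcongr
      _ = 2 ^ β * ((2 ^ β) ^ k * (1 - Real.cos 1)) := by
          rw [← Real.rpow_pow_comm zero_le_two, pow_succ]; ring
      _ ≤ 2 ^ β * barrierTerm (2 ^ β) k y := by
          gcongr
          exact le_barrierTerm hθ hy Real.cos_one_pos.le (cos_le_cos_one_of_mem_Icc hmem)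
      _ ≤ 2 ^ β * barrier (2 ^ β) y := by
          gcongr
          exact (summable_barrierTerm hθ hθ2 hy).le_tsum k fun j _ => barrierTerm_nonneg hθ hy j

lemma tendsto_barrier_div_atTop (hθ : 0 ≤ θ) (hθ2 : θ < 2) (a : ℤ) :
    Tendsto (fun R : ℕ => barrier θ (a, R) / R) atTop (nhds 0) := by
  have hnonneg (R k : ℕ) : 0 ≤ barrierTerm θ k (a, R) / R :=
    div_nonneg (barrierTerm_nonneg hθ R.cast_nonneg k) R.cast_nonneg
  have hterm (k : ℕ) : Tendsto (fun R : ℕ => barrierTerm θ k (a, R) / R) atTop (nhds 0) :=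
    squeeze_zero (fun R => hnonneg R k)
      (fun R => by gcongr; exact barrierTerm_le_pow_mul_two hθ R.cast_nonneg k)
      (tendsto_const_div_atTop_nhds_zero_nat _)
  have hbound : ∀ᶠ R : ℕ in atTop, ∀ k,
      ‖barrierTerm θ k (a, R) / R‖ ≤ (θ / 2) ^ k * ((a : ℝ) ^ 2 + 1) := by
    filter_upwards [eventually_ge_atTop 1] with R hR k
    have hR' : (1 : ℝ) ≤ R := by exact_mod_cast hR
    rw [Real.norm_of_nonneg (hnonneg R k), div_le_iff₀ (by positivity)]
    calc barrierTerm θ k (a, R) ≤ (θ / 2) ^ k * ((a : ℝ) ^ 2 + R) := by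
          simpa using barrierTerm_le (y := (a, R)) hθ R.cast_nonneg k
      _ ≤ (θ / 2) ^ k * ((a : ℝ) ^ 2 * R + R) := by
          gcongr
          exact le_mul_of_one_le_right (sq_nonneg _) hR'
      _ = (θ / 2) ^ k * ((a : ℝ) ^ 2 + 1) * R := by ring
  have hlim := tendsto_tsum_of_dominated_convergence
    ((summable_half_pow hθ hθ2).mul_right _) hterm hbound
  simpa only [barrier, tsum_zero, tsum_div_const] using hlim

lemma exists_barrier (hβ : 0 < β) (hβ1 : β < 1) : ∃ f : ℤ × ℤ → ℝ,
    (∀ y, 0 ≤ y.2 → |(y.1 : ℝ)| ^ β ≤ f y) ∧ (∀ y, 0 < y.2 → stepAverage f y = f y) ∧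
      ∀ a : ℤ, Tendsto (fun R : ℕ => f (a, R) / R) atTop (nhds 0) := by
  have hθ : (0 : ℝ) ≤ 2 ^ β := by positivity
  have hθ2 : (2 : ℝ) ^ β < 2 := Real.rpow_lt_self_of_one_lt one_lt_two hβ1
  have hcos : 0 < 1 - Real.cos 1 := by linarith [Real.cos_one_le]
  refine ⟨(2 ^ β / (1 - Real.cos 1)) • barrier (2 ^ β), fun y hy => ?_, fun y hy => ?_,
    fun a => ?_⟩
  · rw [Pi.smul_apply, smul_eq_mul, div_mul_eq_mul_div, le_div_iff₀' hcos]
    exact one_sub_cos_one_mul_rpow_le_barrier hβ hβ1 hy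
  · rw [map_smul, Pi.smul_apply, Pi.smul_apply, stepAverage_barrier hθ hθ2 hy]
  · simpa [mul_div_assoc] using (tendsto_barrier_div_atTop hθ hθ2 a).const_mul _

end Barrier

section Core

variable {α β H : ℝ} {B : Set (ℤ × ℤ)} {h₀ a b : ℤ} {g : ℤ × ℤ → ℝ}

lemma pow_mul_le_harm_of_superharmonic (hg : ∀ y ∈ freeRegion B, 0 ≤ g y)
    (hsup : ∀ y ∈ freeRegion B, stepAverage g y ≤ g y)
    (hbd : ∀ y ∉ freeRegion B, 0 ≤ y.2 → (y.2 : ℝ) ≤ g y) (hb : 0 ≤ b) (hab : (a, b) ∈ B)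
    (hcol : ∀ j, b < j → (a, j) ∉ B) {k N : ℕ} (hk : 0 < k) (hN : b + k ≤ N) :
    (1 / 4) ^ k * (4 * (((b + k : ℤ) : ℝ) - g (a, b + k))) ≤ harm B N (a, b) := by
  have hN0 : 0 < N := by omega
  have hfree (j : ℤ) (hj : b < j) : (a, j) ∈ freeRegion B := ⟨hb.trans_lt hj, hcol j hj⟩
  have hpos : ∀ y ∈ freeRegion B, 0 < y.2 := fun y hy => hy.1
  have hhigh := four_mul_min_sub_le_green hpos hg hsup hbd (N := N) (by omega)
    (hfree (b + k) (by omega))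
  rw [min_eq_left (by exact_mod_cast hN)] at hhigh
  calc (1 / 4) ^ k * (4 * (((b + k : ℤ) : ℝ) - g (a, b + k)))
      ≤ (1 / 4) ^ k * green (freeRegion B) (lineIndicator (freeRegion B) N) (a, b + k) := by
        gcongr
    _ ≤ green (freeRegion B) (lineIndicator (freeRegion B) N) (a, b) :=
        pow_mul_green_le_green_of_column (lineIndicator_nonneg _ _)
          (summable_killedStep_pow_lineIndicator hpos (by omega)) hfree k
    _ = harm B N (a, b) := (harm_eq_green hN0 hab).symm

lemma exists_pos_eventually_le_harm_of_superharmonic (hg : ∀ y ∈ freeRegion B, 0 ≤ g y)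
    (hsup : ∀ y ∈ freeRegion B, stepAverage g y ≤ g y)
    (hbd : ∀ y ∉ freeRegion B, 0 ≤ y.2 → (y.2 : ℝ) ≤ g y)
    (hlim : Tendsto (fun R : ℕ => g (a, R) / R) atTop (nhds 0)) (hb : 0 ≤ b) (hab : (a, b) ∈ B)
    (hcol : ∀ j, b < j → (a, j) ∉ B) :
    ∃ c : ℝ, 0 < c ∧ ∀ᶠ N : ℕ in atTop, c ≤ harm B N (a, b) := by
  lift b to ℕ using hb
  obtain ⟨R, hgR, hbR⟩ :=
    ((hlim.eventually_lt_const one_pos).and (eventually_gt_atTop b)).exists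
  obtain ⟨k, rfl⟩ := Nat.exists_eq_add_of_le hbR.le
  rw [div_lt_one (by exact_mod_cast Nat.zero_lt_of_lt hbR)] at hgR
  refine ⟨(1 / 4) ^ k * (4 * (((b + k : ℕ) : ℝ) - g (a, (b + k : ℕ)))), ?_, ?_⟩
  · have := sub_pos.2 hgR
    positivity
  · filter_upwards [eventually_ge_atTop (b + k)] with N hN
    simpa using pow_mul_le_harm_of_superharmonic hg hsup hbd b.cast_nonneg hab hcol
      (k := k) (by omega) (by exact_mod_cast hN)

lemma exists_pos_eventually_le_harm (hβ : 0 < β) (hβ1 : β < 1) (hH : 0 ≤ H)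
    (hBH : ∀ y ∈ B, (y.2 : ℝ) ≤ H ∨ (y.2 : ℝ) ≤ |(y.1 : ℝ)| ^ β) (hb : 0 ≤ b)
    (hab : (a, b) ∈ B) (hcol : ∀ j, b < j → (a, j) ∉ B) :
    ∃ c : ℝ, 0 < c ∧ ∀ᶠ N : ℕ in atTop, c ≤ harm B N (a, b) := by
  obtain ⟨f, hfβ, hharm, hlim⟩ := exists_barrier hβ hβ1
  have hf (y : ℤ × ℤ) (hy : 0 ≤ y.2) : 0 ≤ f y :=
    (Real.rpow_nonneg (abs_nonneg _) β).trans (hfβ y hy)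
  refine exists_pos_eventually_le_harm_of_superharmonic (g := f + H • 1) (fun y hy => ?_)
    (fun y hy => ?_) (fun y hy hy0 => ?_) ?_ hb hab hcol
  · simpa using add_nonneg (hf y hy.1.le) hH
  · rw [map_add, map_smul, stepAverage_one, Pi.add_apply, hharm y hy.1, Pi.add_apply]
  · have hfy := hf y hy0
    have hcases : (y.2 : ℝ) ≤ H ∨ (y.2 : ℝ) ≤ |(y.1 : ℝ)| ^ β := by
      by_cases hyB : y ∈ B
      · exact hBH y hyB
      · have hy2 : y.2 ≤ 0 := not_lt.1 fun h => hy ⟨h, hyB⟩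
        exact .inl (le_trans (by exact_mod_cast hy2) hH)
    simp only [Pi.add_apply, Pi.smul_apply, Pi.one_apply, smul_eq_mul, mul_one]
    rcases hcases with h | h
    · linarith
    · linarith [hfβ y hy0]
  · simpa [add_div] using (hlim a).add (tendsto_const_div_atTop_nhds_zero_nat H)

lemma boxD₀_finite (α : ℝ) (h₀ : ℤ) : (boxD₀ α h₀).Finite :=
  ((Set.finite_Icc (-⌈(h₀ : ℝ) ^ α⌉) ⌈(h₀ : ℝ) ^ α⌉).prod (Set.finite_Icc 0 h₀)).subset
    fun _ hx => ⟨abs_le.1 hx.1, hx.2⟩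

lemma snd_le_rpow_of_notMem_Bhat {y : ℤ × ℤ} (hy : y ∈ B) (h : y ∉ Bhat α B) :
    (y.2 : ℝ) ≤ |(y.1 : ℝ)| ^ (1 / α) := by
  by_contra hlt
  exact h ⟨hy, fun hle => hlt hle.2⟩

lemma snd_le_rpow_iff (hα : 0 < α) {y : ℤ × ℤ} (hy : 0 ≤ y.2) :
    (y.2 : ℝ) ≤ |(y.1 : ℝ)| ^ (1 / α) ↔ (y.2 : ℝ) ^ α ≤ |(y.1 : ℝ)| := by
  rw [one_div]
  exact Real.le_rpow_inv_iff_of_pos (by exact_mod_cast hy) (abs_nonneg _) hα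

lemma mem_boxD₀_of_mem_Bhat (hα : 0 < α) (hB : B ⊆ upperH) {y : ℤ × ℤ} (hy : y ∈ Bhat α B) :
    y ∈ boxD₀ α y.2 := by
  have hy0 : 0 ≤ y.2 := hB hy.1
  have hlt : |(y.1 : ℝ)| < (y.2 : ℝ) ^ α := by
    rw [← not_le, ← snd_le_rpow_iff hα hy0]
    exact fun hle => hy.2 ⟨hy0, hle⟩
  refine ⟨?_, hy0, le_rfl⟩
  have hceil := hlt.le.trans (Int.le_ceil _)
  exact_mod_cast hceil

-- Above height `h₀` the set `B` only has points with `h ^ α ≤ |x|`, and `(h₀ + 1) ^ α` already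
-- exceeds the half-width `⌈h₀ ^ α⌉` of the box because `α ≥ 1`.
lemma notMem_of_lt_of_abs_le_ceil (hα : 1 ≤ α) (hh₀ : 0 ≤ h₀) (hBhat : ∀ y ∈ Bhat α B, y.2 ≤ h₀)
    (ha : |a| ≤ ⌈(h₀ : ℝ) ^ α⌉) {j : ℤ} (hj : h₀ < j) : (a, j) ∉ B := by
  intro hjB
  have hpow : (j : ℝ) ^ α ≤ |(a : ℝ)| :=
    (snd_le_rpow_iff (y := (a, j)) (zero_lt_one.trans_le hα) (hh₀.trans hj.le)).1
      (snd_le_rpow_of_notMem_Bhat hjB fun h => (hBhat _ h).not_gt hj)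
  have hh₀' : (0 : ℝ) ≤ h₀ := by exact_mod_cast hh₀
  have hlt := calc |(a : ℝ)| ≤ ⌈(h₀ : ℝ) ^ α⌉ := by exact_mod_cast ha
    _ < (h₀ : ℝ) ^ α + 1 := Int.ceil_lt_add_one _
    _ ≤ ((h₀ : ℝ) + 1) ^ α := by simpa using Real.add_rpow_le_rpow_add hh₀' zero_le_one hα
    _ ≤ (j : ℝ) ^ α := by
        gcongr
        exact_mod_cast hj
  exact hlt.not_ge hpow

lemma exists_mem_core_free_column (hα : 1 ≤ α) (hB : B ⊆ upperH)
    (hBhat : ∀ y ∈ Bhat α B, y.2 ≤ h₀) (hcore : (B ∩ boxD₀ α h₀).Nonempty) :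
    ∃ a b : ℤ, (a, b) ∈ B ∩ boxD₀ α h₀ ∧ ∀ j, b < j → (a, j) ∉ B := by
  obtain ⟨⟨a, b₁⟩, hb₁, ha, hb₁0, hb₁h⟩ := hcore
  have hfree (j : ℤ) (hj : (a, j) ∈ B) : j ≤ h₀ := not_lt.1 fun hlt =>
    notMem_of_lt_of_abs_le_ceil hα (hb₁0.trans hb₁h) hBhat ha hlt hj
  obtain ⟨b, hb, hmax⟩ := Int.exists_greatest_of_bdd (P := fun j => (a, j) ∈ B)
    ⟨h₀, hfree⟩ ⟨b₁, hb₁⟩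
  exact ⟨a, b, ⟨hb, ha, hB hb, hfree b hb⟩, fun j hj hjB => (hmax j hjB).not_gt hj⟩

lemma core_nonempty (hα : 0 < α) (hB : B ⊆ upperH)
    (hmax : (Bhat α B).Nonempty → IsGreatest (Prod.snd '' Bhat α B) h₀)
    (hmin : Bhat α B = ∅ → IsLeast {h : ℤ | 0 ≤ h ∧ (B ∩ boxD₀ α h).Nonempty} h₀) :
    (B ∩ boxD₀ α h₀).Nonempty := by
  rcases (Bhat α B).eq_empty_or_nonempty with hempty | hne
  · exact (hmin hempty).1.2
  · obtain ⟨⟨y, hy, rfl⟩, -⟩ := hmax hne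
    exact ⟨y, hy.1, mem_boxD₀_of_mem_Bhat hα hB hy⟩

lemma harm_le_tsum_harm {S : Set (ℤ × ℤ)} (hS : S.Finite) {x : ℤ × ℤ} (hx : x ∈ S) (N : ℕ) :
    harm B N x ≤ ∑' y : S, harm B N (y : ℤ × ℤ) :=
  have := hS.to_subtype
  Summable.of_finite.le_tsum (⟨x, hx⟩ : S) fun y _ => harm_nonneg B N y

end Core

theorem harm_core_ge_general (α : ℝ) (hα : 1 < α) (B : Set (ℤ × ℤ)) (hB : B ⊆ upperH) (h₀ : ℤ)
    (hmax : (Bhat α B).Nonempty → IsGreatest (Prod.snd '' Bhat α B) h₀)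
    (hmin : Bhat α B = ∅ → IsLeast {h : ℤ | 0 ≤ h ∧ (B ∩ boxD₀ α h).Nonempty} h₀) :
    ∃ c : ℝ, 0 < c ∧
      (∀ᶠ N : ℕ in atTop, c ≤ ∑' x : ↥(B ∩ boxD₀ α h₀), harm B N (x : ℤ × ℤ)) ∧
      ∀ l : ℝ, Tendsto (fun N : ℕ => ∑' x : ↥(B ∩ boxD₀ α h₀), harm B N (x : ℤ × ℤ))
        atTop (nhds l) → c ≤ l := by
  have hBhat : ∀ y ∈ Bhat α B, y.2 ≤ h₀ := fun y hy => (hmax ⟨y, hy⟩).2 ⟨y, hy, rfl⟩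
  obtain ⟨a, b, hab, hcol⟩ := exists_mem_core_free_column hα.le hB hBhat
    (core_nonempty (zero_lt_one.trans hα) hB hmax hmin)
  have hBH (y : ℤ × ℤ) (hy : y ∈ B) :
      (y.2 : ℝ) ≤ h₀ ∨ (y.2 : ℝ) ≤ |(y.1 : ℝ)| ^ (1 / α) := by
    by_cases hyhat : y ∈ Bhat α B
    · exact .inl (by exact_mod_cast hBhat y hyhat)
    · exact .inr (snd_le_rpow_of_notMem_Bhat hy hyhat)
  obtain ⟨hb, hbh₀⟩ : 0 ≤ b ∧ b ≤ h₀ := hab.2.2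
  obtain ⟨c, hc, hpoint⟩ := exists_pos_eventually_le_harm (by positivity)
    ((div_lt_one (by positivity)).2 hα) (by exact_mod_cast hb.trans hbh₀) hBH hb hab.1 hcol
  have hcore : ∀ᶠ N : ℕ in atTop, c ≤ ∑' x : ↥(B ∩ boxD₀ α h₀), harm B N (x : ℤ × ℤ) :=
    hpoint.mono fun N hN =>
      hN.trans (harm_le_tsum_harm ((boxD₀_finite α h₀).subset Set.inter_subset_right) hab N)
  exact ⟨c, hc, hcore, fun l hl => ge_of_tendsto hl hcore⟩

/-- **Theorem 2, quantitative form.** Let `α > 1` with `α ∉ ℚ ∪ ℚ₂`, let `B ⊂ ℍ` be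
nonempty with `B̂ = B \ {x ∈ ℍ : x₂ ≤ |x₁|^{1/α}}` finite, let `h₀ = max_{x ∈ B̂} x₂`
if `B̂ ≠ ∅` and `h₀ = min {h ≥ 0 : B ∩ ([−⌈h^α⌉,⌈h^α⌉] × [0,h]) ≠ ∅}` if `B̂ = ∅`,
and put `B₀ = B ∩ D₀` where `D₀ = [−⌈h₀^α⌉, ⌈h₀^α⌉] × [0, h₀]`.  Then there exists
`c > 0` such that `H_{B,N}(B₀) = Σ_{x ∈ B₀} H_{B,N}(x) ≥ c` for all sufficiently
large `N`; in particular any limit of `Σ_{x ∈ B₀} H_{B,N}(x)` as `N → ∞` is `≥ c > 0`. -/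
theorem harm_core_ge (α : ℝ) (hα : 1 < α) (hirr : Irrational α) (hQ2 : α ∉ Q2)
    (B : Set (ℤ × ℤ)) (hB : B ⊆ upperH) (hne : B.Nonempty)
    (hfin : (Bhat α B).Finite)
    (h₀ : ℤ)
    (hmax : (Bhat α B).Nonempty → IsGreatest (Prod.snd '' Bhat α B) h₀)
    (hmin : Bhat α B = ∅ →
      IsLeast {h : ℤ | 0 ≤ h ∧
        (B ∩ {x | |x.1| ≤ ⌈(h : ℝ) ^ α⌉ ∧ 0 ≤ x.2 ∧ x.2 ≤ h}).Nonempty} h₀) :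
    ∃ c : ℝ, 0 < c ∧
      (∀ᶠ N : ℕ in atTop, c ≤ ∑' x : ↥(B ∩ boxD₀ α h₀), harm B N (x : ℤ × ℤ)) ∧
      ∀ l : ℝ, Tendsto (fun N : ℕ => ∑' x : ↥(B ∩ boxD₀ α h₀), harm B N (x : ℤ × ℤ))
        atTop (nhds l) → c ≤ l :=
  harm_core_ge_general α hα B hB h₀ hmax hmin

end SHM
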